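/- Let K be a field, fix s = (s_1,…,s_m) ∈ ℕ^m and δ ∈ ℤ_{>0}, with the associated α_j, β_j, m̄, expansion-compression matrix E and expanded shift s̄ as in the column partial linearization. Let F ∈ K[x]^{m×n} and r = m̄ − rank(F). Assume that every basis of ker(F) in −s-reduced form has nonnegative −s-row degree. Let Q ∈ K[x]^{r×m̄} be a basis of ker(EF) in −s̄-weak Popov form, and let P be the submatrix of Q formed by the rows whose −s̄-pivot index lies in {α_1+⋯+α_j : 1 ≤ j ≤ m}. Then P has exactly m − rank(F) rows, and P·E is a basis of ker(F) in −s-weak Popov form. -/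

import Mathlib

open Polynomial Matrix

/-- The degree of a polynomial, viewed in `ℤ ∪ {-∞}`. -/
noncomputable def degZ {K : Type*} [Field K] (p : K[X]) : WithBot ℤ :=
  p.degree.map fun a : ℕ => (a : ℤ)

/-- The `s`-row degree of a (row) vector of polynomials. -/
noncomputable def rdegRow {K : Type*} [Field K] {ν : Type*} [Fintype ν]
    (s : ν → ℤ) (v : ν → K[X]) : WithBot ℤ :=
  Finset.univ.sup fun j => degZ (v j) + (s j : WithBot ℤ)

/-- The `s`-row degree of a polynomial matrix. -/
noncomputable def rdeg {K : Type*} [Field K] {ι ν : Type*} [Fintype ν]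
    (s : ν → ℤ) (P : Matrix ι ν K[X]) : ι → WithBot ℤ :=
  fun i => rdegRow s (P i)

/-- The `t`-column degree of a polynomial matrix. -/
noncomputable def cdeg {K : Type*} [Field K] {ι ν : Type*} [Fintype ι]
    (t : ι → ℤ) (P : Matrix ι ν K[X]) : ν → WithBot ℤ :=
  fun j => Finset.univ.sup fun i => degZ (P i j) + (t i : WithBot ℤ)

/-- Coefficient of integer degree `d` of a polynomial (0 if `d < 0`). -/
noncomputable def coeffZ {K : Type*} [Field K] (p : K[X]) (d : ℤ) : K :=
  if 0 ≤ d then p.coeff d.toNat else 0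

/-- The `s`-leading matrix of a polynomial matrix. -/
noncomputable def lm {K : Type*} [Field K] {ι ν : Type*} [Fintype ν]
    (s : ν → ℤ) (P : Matrix ι ν K[X]) : Matrix ι ν K :=
  Matrix.of fun i j =>
    (rdeg s P i).recBotCoe 0 fun t => coeffZ (P i j) (t - s j)

/-- `P` is in `s`-reduced form: its `s`-leading matrix has full row rank,
i.e. its rows are linearly independent over `K`. -/
def IsReducedForm {K : Type*} [Field K] {ι ν : Type*} [Fintype ν]
    (s : ν → ℤ) (P : Matrix ι ν K[X]) : Prop :=
  LinearIndependent K fun i => lm s P i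

open Classical in
/-- The `s`-pivot index of a row vector: the largest column index where the
`s`-row degree is attained (with a nonzero entry); `⊥` for the zero row. -/
noncomputable def piv {K : Type*} [Field K] {ν : Type*} [Fintype ν] [LinearOrder ν]
    (s : ν → ℤ) (v : ν → K[X]) : WithBot ν :=
  (Finset.univ.filter fun j => v j ≠ 0 ∧ degZ (v j) + (s j : WithBot ℤ) = rdegRow s v).max

/-- The `s`-pivot degree of a row vector (junk value `0` for the zero row). -/
noncomputable def pivDeg {K : Type*} [Field K] {ν : Type*} [Fintype ν] [LinearOrder ν]
    (s : ν → ℤ) (v : ν → K[X]) : ℕ :=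
  ((piv s v).map fun j => (v j).natDegree).unbotD 0

/-- `P` is in `s`-weak Popov form: no zero row and strictly increasing `s`-pivot indices. -/
def IsWeakPopov {K : Type*} [Field K] {ι ν : Type*} [Fintype ν] [LinearOrder ν] [Preorder ι]
    (s : ν → ℤ) (P : Matrix ι ν K[X]) : Prop :=
  (∀ i, piv s (P i) ≠ ⊥) ∧ StrictMono fun i => piv s (P i)

/-- `P` is in `s`-unordered weak Popov form: no zero row and pairwise distinct
`s`-pivot indices. -/
def IsUWeakPopov {K : Type*} [Field K] {ι ν : Type*} [Fintype ν] [LinearOrder ν]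
    (s : ν → ℤ) (P : Matrix ι ν K[X]) : Prop :=
  (∀ i, piv s (P i) ≠ ⊥) ∧ Function.Injective fun i => piv s (P i)

/-- `P` is in `s`-Popov form: `s`-weak Popov, monic pivots, and each pivot entry
has degree strictly larger than the other entries of its column. -/
def IsPopov {K : Type*} [Field K] {ι ν : Type*} [Fintype ν] [LinearOrder ν] [Preorder ι]
    (s : ν → ℤ) (P : Matrix ι ν K[X]) : Prop :=
  IsWeakPopov s P ∧
    ∀ i (j : ν), piv s (P i) = (j : WithBot ν) →
      (P i j).Monic ∧ ∀ i', i' ≠ i → (P i' j).degree < (P i j).degree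

/-- The row space of a polynomial matrix. -/
noncomputable def rowSpace {K : Type*} [Field K] {ι ν : Type*} (P : Matrix ι ν K[X]) :
    Submodule K[X] (ν → K[X]) :=
  Submodule.span K[X] (Set.range fun i => P i)

/-- The rows of `B` form a basis of the module `M`. -/
def IsBasisOf {K : Type*} [Field K] {ι ν : Type*} (B : Matrix ι ν K[X])
    (M : Submodule K[X] (ν → K[X])) : Prop :=
  LinearIndependent K[X] (fun i => B i) ∧
    Submodule.span K[X] (Set.range fun i => B i) = M

/-- The left kernel of a polynomial matrix. -/
noncomputable def leftKernel {K : Type*} [Field K] {ι ν : Type*} [Fintype ι]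
    (F : Matrix ι ν K[X]) : Submodule K[X] (ι → K[X]) :=
  LinearMap.ker F.vecMulLinear

/-! ### Column partial linearization (Definition 5.3) -/

/-- Number of parts `α_j = ⌈s_j/δ⌉` (with `α_j = 1` when `s_j = 0`). -/
def cplα (δ : ℕ) {m : ℕ} (s : Fin m → ℕ) (j : Fin m) : ℕ :=
  max 1 ((s j + δ - 1) / δ)

/-- Remainder `β_j` so that `s_j = (α_j − 1)δ + β_j`. -/
def cplβ (δ : ℕ) {m : ℕ} (s : Fin m → ℕ) (j : Fin m) : ℕ :=
  s j - (cplα δ s j - 1) * δ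

/-- Index set of the expanded columns: pairs `(j, i)` with `0 ≤ i < α_j`,
ordered lexicographically (this corresponds to `α_1 + ⋯ + α_{j-1} + i`). -/
abbrev CplIdx (δ : ℕ) {m : ℕ} (s : Fin m → ℕ) := Lex ((j : Fin m) × Fin (cplα δ s j))

/-- The expansion-compression matrix `E`: block diagonal with `j`-th block the
column `(1, x^δ, …, x^{(α_j−1)δ})ᵀ`. -/
noncomputable def cplE (K : Type*) [Field K] (δ : ℕ) {m : ℕ} (s : Fin m → ℕ) :
    Matrix (CplIdx δ s) (Fin m) K[X] :=
  Matrix.of fun c j =>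
    if (ofLex c).1 = j then (Polynomial.X : K[X]) ^ (((ofLex c).2 : ℕ) * δ) else 0

/-- The expanded shift `s̄`: within block `j`, `δ` everywhere except `β_j` at
the last position. -/
def cplShift (δ : ℕ) {m : ℕ} (s : Fin m → ℕ) (c : CplIdx δ s) : ℕ :=
  if ((ofLex c).2 : ℕ) = cplα δ s (ofLex c).1 - 1 then cplβ δ s (ofLex c).1 else δ

/-- The block diagonal matrix `Z = diag(Z_1,…,Z_m)` with
`Z_j ∈ K[x]^{(α_j−1)×α_j}` having `x^δ` on the diagonal and `−1` on the
superdiagonal. -/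
noncomputable def cplZ (K : Type*) [Field K] (δ : ℕ) {m : ℕ} (s : Fin m → ℕ) :
    Matrix (Lex ((j : Fin m) × Fin (cplα δ s j - 1))) (CplIdx δ s) K[X] :=
  Matrix.of fun r c =>
    if (ofLex r).1 = (ofLex c).1 then
      (if ((ofLex c).2 : ℕ) = ((ofLex r).2 : ℕ) then (Polynomial.X : K[X]) ^ δ
       else if ((ofLex c).2 : ℕ) = ((ofLex r).2 : ℕ) + 1 then -1 else 0)
    else 0

/-!
Order the terms `x ^ k` in column `j` lexicographically by shifted degree `k + t j`, then by `j`.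
The position `(d, j)` of the leading term of a row consists of its `t`-row degree and its `t`-pivot
index. The leading positions of a submodule are well-ordered, so cancelling leading terms shows that
a submodule contained in `M` and having the same leading positions is equal to `M`; for rows with
distinct pivot indices, those of the row space are `(d i + k, p i)` with `k : ℕ`.

Let `N` be the preimage of `M` under compression by `E`, for the shifts `-s̄` and `-s`. In a row `w`
of `N` with leading position `(d, last of block j)`, the entries that are not last in their block
contribute only terms of shifted degree `< d` to `w E`, whose leading position is thus `(d, j)`.
Conversely, a row of `M` with leading position `(d, j)`, `d ≥ 0`, is expanded by repeated division
with remainder by `x ^ δ`; the entries that are not last have degree `< δ`, hence negative shifted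
degree, and the leading position is `(d, last of block j)`. The hypothesis on reduced bases says
that all leading positions of `M` have `d ≥ 0`, so the rows of `P E` account for all of them. The
number of rows is given by rank–nullity.
-/

section Degrees

variable {K : Type*} [Field K]

lemma coeffZ_sum {κ : Type*} (S : Finset κ) (f : κ → K[X]) (d : ℤ) :
    coeffZ (∑ i ∈ S, f i) d = ∑ i ∈ S, coeffZ (f i) d := by
  simp only [coeffZ, finsetSum_coeff]
  split_ifs
  · rfl
  · exact Finset.sum_const_zero.symm

lemma coeffZ_X_pow_mul (k : ℕ) (q : K[X]) (d : ℤ) :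
    coeffZ (X ^ k * q) d = coeffZ q (d - k) := by
  simp only [coeffZ, coeff_X_pow_mul', ← ite_and]
  by_cases h : 0 ≤ d - k
  · rw [if_pos (by omega), if_pos h, show d.toNat - k = (d - k).toNat by omega]
  · rw [if_neg (by omega), if_neg h]

lemma coeffZ_eq_zero_of_natDegree_lt {q : K[X]} {d : ℤ} (h : (q.natDegree : ℤ) < d) :
    coeffZ q d = 0 := by
  rw [coeffZ, if_pos (by omega)]
  exact coeff_eq_zero_of_natDegree_lt (by omega)

lemma coeffZ_natDegree (q : K[X]) : coeffZ q q.natDegree = q.leadingCoeff := by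
  simp [coeffZ]

lemma degZ_of_ne_zero {q : K[X]} (hq : q ≠ 0) : degZ q = ((q.natDegree : ℤ) : WithBot ℤ) := by
  rw [degZ, degree_eq_natDegree hq]
  rfl

lemma degZ_add_lt_iff {q : K[X]} {a d : ℤ} :
    degZ q + (a : WithBot ℤ) < d ↔ ∀ e, d ≤ e → coeffZ q (e - a) = 0 := by
  rcases eq_or_ne q 0 with rfl | hq
  · simp [degZ, coeffZ]
  rw [degZ_of_ne_zero hq, ← WithBot.coe_add, WithBot.coe_lt_coe]
  refine ⟨fun h e he ↦ coeffZ_eq_zero_of_natDegree_lt (by omega), fun h ↦ ?_⟩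
  by_contra! hd
  have := h _ hd
  rw [add_sub_cancel_right, coeffZ_natDegree] at this
  exact leadingCoeff_ne_zero.2 hq this

lemma degZ_add_le_iff {q : K[X]} {a d : ℤ} :
    degZ q + (a : WithBot ℤ) ≤ d ↔ ∀ e, d < e → coeffZ q (e - a) = 0 := by
  have : degZ q + (a : WithBot ℤ) ≤ d ↔ degZ q + (a : WithBot ℤ) < (d + 1 : ℤ) := by
    cases degZ q + (a : WithBot ℤ) with
    | bot => simp
    | coe b => simp only [WithBot.coe_le_coe, WithBot.coe_lt_coe, Int.lt_add_one_iff]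
  simp only [this, degZ_add_lt_iff, Int.add_one_le_iff]

end Degrees

section LeadingPositions

variable {K ν : Type*} [Field K]

/-- The coefficient of `x ^ (e - t j)` in the `j`-th entry of `v`, where `(e, j)` is the position
`a`: `e` is thus the `t`-shifted degree. Positions are compared first by shifted degree, then by
index. -/
noncomputable def termCoeff (t : ν → ℤ) (a : ℤ ×ₗ ν) : (ν → K[X]) →ₗ[K] K where
  toFun v := coeffZ (v (ofLex a).2) ((ofLex a).1 - t (ofLex a).2)
  map_add' v w := by simp only [coeffZ, Pi.add_apply, coeff_add]; split_ifs <;> simp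
  map_smul' c v := by simp only [coeffZ, Pi.smul_apply, coeff_smul]; split_ifs <;> simp

lemma termCoeff_toLex (t : ν → ℤ) (e : ℤ) (j : ν) (v : ν → K[X]) :
    termCoeff t (toLex (e, j)) v = coeffZ (v j) (e - t j) :=
  rfl

lemma termCoeff_smul (t : ν → ℤ) (e : ℤ) (j : ν) (q : K[X]) (v : ν → K[X]) :
    termCoeff t (toLex (e, j)) (q • v) =
      q.sum fun k c ↦ c * termCoeff t (toLex (e - k, j)) v := by
  have key (k : ℕ) (c : K) : termCoeff t (toLex (e, j)) (monomial k c • v) =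
      c * termCoeff t (toLex (e - k, j)) v := by
    rw [← C_mul_X_pow_eq_monomial, ← smul_eq_C_mul, smul_assoc, map_smul, smul_eq_mul,
      termCoeff_toLex, Pi.smul_apply, smul_eq_mul, coeffZ_X_pow_mul, sub_right_comm,
      termCoeff_toLex]
  conv_lhs => rw [q.as_sum_support, Finset.sum_smul, map_sum]
  exact Finset.sum_congr rfl fun k _ ↦ key k _

variable [LinearOrder ν]

/-- `a` is the position of the leading term of `v` for the `t`-shifted term-over-position order.
Its index is the `t`-pivot index of `v` and its degree is the `t`-row degree. -/
def IsLeading (t : ν → ℤ) (v : ν → K[X]) (a : ℤ ×ₗ ν) : Prop :=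
  IsGreatest {b | termCoeff t b v ≠ 0} a

variable {t : ν → ℤ} {v : ν → K[X]} {a : ℤ ×ₗ ν} {d : ℤ} {p : ν}

lemma isLeading_iff :
    IsLeading t v a ↔ termCoeff t a v ≠ 0 ∧ ∀ b, a < b → termCoeff t b v = 0 := by
  refine and_congr_right fun _ ↦ forall_congr' fun b ↦ ?_
  rw [← not_lt, Set.mem_ofPred_eq, not_imp_not]

lemma IsLeading.termCoeff_ne_zero (h : IsLeading t v a) : termCoeff t a v ≠ 0 :=
  h.1

lemma IsLeading.termCoeff_eq_zero (h : IsLeading t v a) {b : ℤ ×ₗ ν} (hab : a < b) :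
    termCoeff t b v = 0 :=
  (isLeading_iff.1 h).2 b hab

lemma IsLeading.ne_zero (h : IsLeading t v a) : v ≠ 0 := by
  rintro rfl
  exact h.termCoeff_ne_zero (map_zero _)

lemma IsLeading.le_fst (h : IsLeading t v (toLex (d, p))) : t p ≤ d := by
  by_contra! hd
  exact h.termCoeff_ne_zero (if_neg (by simpa using hd))

lemma exists_isLeading [Finite ν] (t : ν → ℤ) (hv : v ≠ 0) : ∃ a, IsLeading t v a := by
  obtain ⟨i, hi, hmax⟩ := Set.exists_max_image {j | v j ≠ 0}
    (fun j ↦ (toLex ((v j).natDegree + t j, j) : ℤ ×ₗ ν)) (Set.toFinite _) (Function.ne_iff.1 hv)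
  refine ⟨toLex ((v i).natDegree + t i, i), ?_, fun b hb ↦ ?_⟩
  · rw [Set.mem_ofPred_eq, termCoeff_toLex, add_sub_cancel_right, coeffZ_natDegree]
    exact leadingCoeff_ne_zero.2 hi
  · obtain ⟨e, j⟩ := b
    replace hb : coeffZ (v j) (e - t j) ≠ 0 := hb
    have hj : v j ≠ 0 := fun h ↦ hb (by simp [h, coeffZ])
    have he : e - t j ≤ (v j).natDegree := not_lt.1 (mt coeffZ_eq_zero_of_natDegree_lt hb)
    calc toLex (e, j) ≤ toLex ((v j).natDegree + t j, j) :=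
          Prod.Lex.toLex_mono ⟨sub_le_iff_le_add.1 he, le_rfl⟩
      _ ≤ toLex ((v i).natDegree + t i, i) := hmax j hj

lemma IsLeading.smul (h : IsLeading t v (toLex (d, p))) {q : K[X]} (hq : q ≠ 0) :
    IsLeading t (q • v) (toLex (d + q.natDegree, p)) := by
  refine isLeading_iff.2 ⟨?_, fun b hb ↦ ?_⟩
  · rw [termCoeff_smul, Polynomial.sum, Finset.sum_eq_single_of_mem q.natDegree
      (natDegree_mem_support_of_nonzero hq), add_sub_cancel_right]
    · exact mul_ne_zero (leadingCoeff_ne_zero.2 hq) h.termCoeff_ne_zero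
    · intro k hk hne
      have := (le_natDegree_of_mem_supp k hk).lt_of_ne hne
      rw [h.termCoeff_eq_zero, mul_zero]
      exact Prod.Lex.toLex_lt_toLex.2 (.inl (by dsimp only; omega))
  · obtain ⟨e, j⟩ := b
    change termCoeff t (toLex (e, j)) _ = 0
    rw [termCoeff_smul]
    refine Finset.sum_eq_zero fun k hk ↦ mul_eq_zero_of_right _ (h.termCoeff_eq_zero ?_)
    have hk : (k : ℤ) ≤ q.natDegree := by exact_mod_cast le_natDegree_of_mem_supp k hk
    calc toLex (d, p) < toLex (e - q.natDegree, j) := by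
          simpa only [Prod.Lex.toLex_lt_toLex, lt_sub_iff_add_lt, eq_sub_iff_add_eq] using
            Prod.Lex.toLex_lt_toLex.1 hb
      _ ≤ toLex (e - k, j) := Prod.Lex.toLex_mono ⟨sub_le_sub_left hk e, le_rfl⟩

lemma exists_isLeading_sum {κ : Type*} {S : Finset κ} (hS : S.Nonempty) {w : κ → ν → K[X]}
    {a : κ → ℤ ×ₗ ν} (ha : Set.InjOn a S) (hw : ∀ i ∈ S, IsLeading t (w i) (a i)) :
    ∃ i ∈ S, IsLeading t (∑ i ∈ S, w i) (a i) := by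
  obtain ⟨i, hi, hmax⟩ := S.exists_max_image a hS
  refine ⟨i, hi, isLeading_iff.2 ⟨?_, fun b hb ↦ ?_⟩⟩
  · rw [map_sum, Finset.sum_eq_single_of_mem i hi fun j hj hne ↦ (hw j hj).termCoeff_eq_zero
      ((hmax j hj).lt_of_ne (ha.ne hj hi hne))]
    exact (hw i hi).termCoeff_ne_zero
  · rw [map_sum]
    exact Finset.sum_eq_zero fun j hj ↦ (hw j hj).termCoeff_eq_zero ((hmax j hj).trans_lt hb)

section Families

variable {ι : Type*} {B : ι → ν → K[X]} {d : ι → ℤ} {p : ι → ν}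

lemma exists_isLeading_linearCombination (hp : p.Injective)
    (hB : ∀ i, IsLeading t (B i) (toLex (d i, p i))) {l : ι →₀ K[X]} (hl : l ≠ 0) :
    ∃ i, ∃ k : ℕ, IsLeading t (Finsupp.linearCombination K[X] B l) (toLex (d i + k, p i)) := by
  have hinj : Set.InjOn (fun i ↦ (toLex (d i + (l i).natDegree, p i) : ℤ ×ₗ ν)) l.support :=
    fun i _ j _ h ↦ hp (congrArg (fun a ↦ (ofLex a).2) h)
  obtain ⟨i, -, h⟩ := exists_isLeading_sum (Finsupp.support_nonempty_iff.2 hl) hinj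
    fun i hi ↦ (hB i).smul (Finsupp.mem_support_iff.1 hi)
  exact ⟨i, _, h⟩

lemma linearIndependent_of_isLeading (hp : p.Injective)
    (hB : ∀ i, IsLeading t (B i) (toLex (d i, p i))) : LinearIndependent K[X] B := by
  refine linearIndependent_iff.2 fun l hl ↦ by_contra fun hne ↦ ?_
  obtain ⟨i, k, h⟩ := exists_isLeading_linearCombination hp hB hne
  exact h.ne_zero hl

/-- The positions of the leading terms of the nonzero elements of `M`. -/
def leadingPositions (t : ν → ℤ) (M : Submodule K[X] (ν → K[X])) : Set (ℤ ×ₗ ν) :=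
  {a | ∃ v ∈ M, IsLeading t v a}

lemma isWF_setOf_shift_le [Finite ν] (t : ν → ℤ) :
    {a : ℤ ×ₗ ν | t (ofLex a).2 ≤ (ofLex a).1}.IsWF := by
  obtain ⟨c, hc⟩ := (Set.finite_range t).bddBelow
  refine Set.IsPWO.isWF (Set.PartiallyWellOrderedOn.ProdLex_iff.2 ⟨?_, fun e ↦ ?_⟩)
  · refine (BddBelow.isWF ⟨c, ?_⟩).isPWO
    rintro _ ⟨a, ha, rfl⟩
    exact (hc (Set.mem_range_self _)).trans ha
  · exact (Set.toFinite _).isPWO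

lemma eq_of_leadingPositions_subset [Finite ν] {M N : Submodule K[X] (ν → K[X])} (hNM : N ≤ M)
    (h : leadingPositions t M ⊆ leadingPositions t N) : N = M := by
  by_contra hne
  obtain ⟨v, hvM, hvN⟩ := SetLike.exists_of_lt (hNM.lt_of_ne hne)
  let S : Set (ℤ ×ₗ ν) := {a | ∃ v ∈ M, v ∉ N ∧ IsLeading t v a}
  have hS : S.IsWF := (isWF_setOf_shift_le t).mono fun a ⟨_, _, _, ha⟩ ↦ ha.le_fst
  have lead_mem {v} (hvM : v ∈ M) (hvN : v ∉ N) : ∃ a ∈ S, IsLeading t v a := by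
    obtain ⟨a, ha⟩ := exists_isLeading t (v := v) fun h0 ↦ hvN (h0 ▸ N.zero_mem)
    exact ⟨a, ⟨v, hvM, hvN, ha⟩, ha⟩
  obtain ⟨a, haS, -⟩ := lead_mem hvM hvN
  obtain ⟨v, hvM, hvN, hva⟩ := hS.min_mem ⟨a, haS⟩
  set a := hS.min ⟨a, haS⟩
  obtain ⟨w, hwN, hwa⟩ := h ⟨v, hvM, hva⟩
  let c := termCoeff t a v / termCoeff t a w
  have hcw : c • w ∈ N := N.smul_of_tower_mem c hwN
  obtain ⟨b, hbS, hb⟩ := lead_mem (M.sub_mem hvM (hNM hcw)) (mt (N.sub_mem_iff_left hcw).1 hvN)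
  have hab : a ≤ b := hS.min_le _ hbS
  refine hb.termCoeff_ne_zero ?_
  rw [map_sub, map_smul, smul_eq_mul]
  rcases hab.eq_or_lt with rfl | hab
  · rw [div_mul_cancel₀ _ hwa.termCoeff_ne_zero, sub_self]
  · rw [hva.termCoeff_eq_zero hab, hwa.termCoeff_eq_zero hab, mul_zero, sub_zero]

lemma mem_leadingPositions_span_iff (hp : p.Injective)
    (hB : ∀ i, IsLeading t (B i) (toLex (d i, p i))) {a : ℤ ×ₗ ν} :
    a ∈ leadingPositions t (Submodule.span K[X] (Set.range B)) ↔
      ∃ i, ∃ k : ℕ, a = toLex (d i + k, p i) := by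
  constructor
  · rintro ⟨v, hv, hva⟩
    obtain ⟨l, rfl⟩ := Finsupp.mem_span_range_iff_exists_finsupp.1 hv
    have hl : l ≠ 0 := by
      rintro rfl
      exact hva.ne_zero Finsupp.sum_zero_index
    obtain ⟨i, k, h⟩ := exists_isLeading_linearCombination hp hB hl
    exact ⟨i, k, hva.unique h⟩
  · rintro ⟨i, k, rfl⟩
    refine ⟨(X ^ k : K[X]) • B i, Submodule.smul_mem _ _ (Submodule.subset_span ⟨i, rfl⟩), ?_⟩
    simpa only [natDegree_X_pow] using (hB i).smul (pow_ne_zero k X_ne_zero)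

lemma isBasisOf_of_leadingPositions [Finite ν] {M : Submodule K[X] (ν → K[X])}
    (hp : p.Injective) (hB : ∀ i, IsLeading t (B i) (toLex (d i, p i))) (hBM : ∀ i, B i ∈ M)
    (h : ∀ a ∈ leadingPositions t M, ∃ i, ∃ k : ℕ, a = toLex (d i + k, p i)) :
    IsBasisOf (Matrix.of B) M :=
  ⟨linearIndependent_of_isLeading hp hB,
    eq_of_leadingPositions_subset (Submodule.span_le.2 (Set.range_subset_iff.2 hBM)) fun a ha ↦
      (mem_leadingPositions_span_iff hp hB).2 (h a ha)⟩

end Families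

end LeadingPositions

lemma linearIndependent_of_echelon {ι ν R : Type*} [LinearOrder ν] [CommRing R] [IsDomain R]
    {f : ι → ν → R} {p : ι → ν} (hp : p.Injective) (hne : ∀ i, f i (p i) ≠ 0)
    (hz : ∀ i j, p i < j → f i j = 0) : LinearIndependent R f := by
  refine linearIndependent_iff.2 fun l hl ↦ by_contra fun hl0 ↦ ?_
  obtain ⟨i, hi, hmax⟩ := l.support.exists_max_image p (Finsupp.support_nonempty_iff.2 hl0)
  have hval : Finsupp.linearCombination R f l (p i) = l i * f i (p i) := by
    rw [Finsupp.linearCombination_apply, Finsupp.sum, Finset.sum_apply]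
    refine Finset.sum_eq_single_of_mem i hi fun j hj hji ↦ ?_
    rw [Pi.smul_apply, hz j _ ((hmax j hj).lt_of_ne (hp.ne hji)), smul_zero]
  rw [hl, Pi.zero_apply] at hval
  exact mul_ne_zero (Finsupp.mem_support_iff.1 hi) (hne i) hval.symm

section WeakPopov

variable {K ν : Type*} [Field K] [LinearOrder ν]
variable {t : ν → ℤ} {v : ν → K[X]} {d : ℤ} {p : ν}

lemma IsLeading.degZ_add_le (h : IsLeading t v (toLex (d, p))) (j : ν) :
    degZ (v j) + (t j : WithBot ℤ) ≤ d :=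
  degZ_add_le_iff.2 fun e he ↦
    h.termCoeff_eq_zero (b := toLex (e, j)) (Prod.Lex.toLex_lt_toLex.2 (.inl he))

lemma IsLeading.degZ_add_eq (h : IsLeading t v (toLex (d, p))) :
    degZ (v p) + (t p : WithBot ℤ) = d :=
  (h.degZ_add_le p).antisymm <| not_lt.1 fun hlt ↦
    h.termCoeff_ne_zero (degZ_add_lt_iff.1 hlt d le_rfl)

lemma IsLeading.degZ_add_lt (h : IsLeading t v (toLex (d, p))) {j : ν} (hj : p < j) :
    degZ (v j) + (t j : WithBot ℤ) < d := by
  refine degZ_add_lt_iff.2 fun e he ↦ h.termCoeff_eq_zero (b := toLex (e, j)) ?_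
  refine Prod.Lex.toLex_lt_toLex.2 ?_
  exact he.lt_or_eq.imp_right fun he ↦ ⟨he, hj⟩

variable [Fintype ν]

lemma IsLeading.rdegRow_eq (h : IsLeading t v (toLex (d, p))) : rdegRow t v = d :=
  (Finset.sup_le fun j _ ↦ h.degZ_add_le j).antisymm <|
    h.degZ_add_eq.ge.trans (Finset.le_sup (f := fun j ↦ degZ (v j) + (t j : WithBot ℤ))
      (Finset.mem_univ p))

lemma IsLeading.piv_eq (h : IsLeading t v (toLex (d, p))) : piv t v = p := by
  classical
  refine le_antisymm (Finset.max_le fun j hj ↦ WithBot.coe_le_coe.2 ?_) (Finset.le_max ?_)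
  · rw [Finset.mem_filter, h.rdegRow_eq] at hj
    exact not_lt.1 fun hlt ↦ (h.degZ_add_lt hlt).ne hj.2.2
  · refine Finset.mem_filter.2 ⟨Finset.mem_univ p, fun h0 ↦ ?_, ?_⟩
    · simpa [h0, degZ] using h.degZ_add_eq
    · rw [h.degZ_add_eq, h.rdegRow_eq]

lemma piv_zero (t : ν → ℤ) : piv t (0 : ν → K[X]) = ⊥ := by
  simp [piv]

lemma isWeakPopov_iff {ι : Type*} [Preorder ι] {B : Matrix ι ν K[X]} :
    IsWeakPopov t B ↔ ∃ (d : ι → ℤ) (p : ι → ν), StrictMono p ∧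
      ∀ i, IsLeading t (B i) (toLex (d i, p i)) := by
  constructor
  · rintro ⟨hne, hmono⟩
    have exists_lead (i : ι) : ∃ d p, IsLeading t (B i) (toLex (d, p)) :=
      have ⟨a, ha⟩ := exists_isLeading t (v := B i) fun h ↦ hne i (by rw [h, piv_zero])
      ⟨_, _, ha⟩
    choose d p hB using exists_lead
    refine ⟨d, p, fun i i' h ↦ ?_, hB⟩
    simpa only [(hB _).piv_eq, WithBot.coe_lt_coe] using hmono h
  · rintro ⟨d, p, hp, hB⟩
    refine ⟨fun i ↦ ?_, fun i i' h ↦ ?_⟩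
    · rw [(hB i).piv_eq]
      exact WithBot.coe_ne_bot
    · simpa only [(hB _).piv_eq, WithBot.coe_lt_coe] using hp h

lemma IsWeakPopov.isReducedForm {ι : Type*} [LinearOrder ι] {B : Matrix ι ν K[X]}
    (h : IsWeakPopov t B) : IsReducedForm t B := by
  obtain ⟨d, p, hp, hB⟩ := isWeakPopov_iff.1 h
  have lm_eq (i : ι) (j : ν) : lm t B i j = termCoeff t (toLex (d i, j)) (B i) := by
    simp only [lm, of_apply, rdeg, (hB i).rdegRow_eq, WithBot.recBotCoe_coe, termCoeff_toLex]
  refine linearIndependent_of_echelon hp.injective (fun i ↦ ?_) fun i j hj ↦ ?_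
  · rw [lm_eq]
    exact (hB i).termCoeff_ne_zero
  · rw [lm_eq]
    exact (hB i).termCoeff_eq_zero (Prod.Lex.toLex_lt_toLex.2 (.inr ⟨rfl, hj⟩))

lemma exists_isWeakPopov_basis (t : ν → ℤ) (M : Submodule K[X] (ν → K[X])) :
    ∃ (k : ℕ) (B : Matrix (Fin k) ν K[X]), IsBasisOf B M ∧ IsWeakPopov t B := by
  classical
  let J : Finset ν := {q | ∃ e, toLex (e, q) ∈ leadingPositions t M}
  have exists_least (q : J) : ∃ d, toLex (d, q.1) ∈ leadingPositions t M ∧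
      ∀ e, toLex (e, q.1) ∈ leadingPositions t M → d ≤ e :=
    Int.exists_least_of_bdd ⟨t q, fun e ⟨_, _, h⟩ ↦ h.le_fst⟩ (Finset.mem_filter.1 q.2).2
  choose d hd hmin using exists_least
  choose B hBM hB using hd
  let f := J.orderIsoOfFin rfl
  have hp : StrictMono fun i ↦ (f i : ν) := fun _ _ h ↦ f.strictMono h
  have hBf (i) : IsLeading t (B (f i)) (toLex (d (f i), (f i : ν))) := hB (f i)
  refine ⟨_, Matrix.of fun i ↦ B (f i), isBasisOf_of_leadingPositions hp.injective hBf
    (fun i ↦ hBM (f i)) fun a ha ↦ ?_, isWeakPopov_iff.2 ⟨_, _, hp, hBf⟩⟩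
  obtain ⟨e, q⟩ := a
  let q' : J := ⟨q, Finset.mem_filter.2 ⟨Finset.mem_univ q, e, ha⟩⟩
  refine ⟨f.symm q', (e - d q').toNat, ?_⟩
  rw [f.apply_symm_apply, Int.toNat_of_nonneg (sub_nonneg.2 (hmin q' e ha)), add_sub_cancel]
  rfl

lemma le_fst_of_mem_leadingPositions {M : Submodule K[X] (ν → K[X])} {c : ℤ}
    (hred : ∀ (k : ℕ) (B : Matrix (Fin k) ν K[X]), IsBasisOf B M → IsReducedForm t B →
      ∀ i, (c : WithBot ℤ) ≤ rdeg t B i)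
    {a : ℤ ×ₗ ν} (ha : a ∈ leadingPositions t M) : c ≤ (ofLex a).1 := by
  obtain ⟨k, B, hBM, hBwp⟩ := exists_isWeakPopov_basis t M
  obtain ⟨d, p, hp, hB⟩ := isWeakPopov_iff.1 hBwp
  rw [← hBM.2, mem_leadingPositions_span_iff hp.injective hB] at ha
  obtain ⟨i, k, rfl⟩ := ha
  have hd : c ≤ d i := by
    have := hred _ B hBM hBwp.isReducedForm i
    rwa [rdeg, (hB i).rdegRow_eq, WithBot.coe_le_coe] at this
  exact hd.trans (le_add_of_nonneg_right k.cast_nonneg)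

end WeakPopov

section Rank

variable {m n R : Type*} [Fintype n] [CommRing R]

lemma rank_map_fractionRing [Finite m] (A : Matrix m n R) :
    (A.map (algebraMap R (FractionRing R))).rank = A.rank := by
  let f : (m → R) →ₗ[R] (m → FractionRing R) :=
    .pi fun i ↦ Algebra.linearMap R (FractionRing R) ∘ₗ .proj i
  let S := Submodule.span R (Set.range A.col)
  let S' := S.localized' (FractionRing R) (nonZeroDivisors R) f
  have hspan : Submodule.span (FractionRing R)
      (Set.range (A.map (algebraMap R (FractionRing R))).col) = S' := by
    simp only [S', S, Submodule.localized'_span, ← Set.range_comp]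
    rfl
  calc (A.map (algebraMap R (FractionRing R))).rank
    _ = Module.finrank (FractionRing R) S' := by rw [rank_eq_finrank_span_cols, hspan]
    _ = Module.finrank R S' := IsFractionRing.finrank_right_eq R _ _
    _ = Module.finrank R S := IsLocalizedModule.finrank_eq (nonZeroDivisors R)
        (S.toLocalized' (FractionRing R) (nonZeroDivisors R) f) le_rfl
    _ = A.rank := A.rank_eq_finrank_span_cols.symm

variable [Fintype m] [IsDomain R]

lemma rank_transpose_of_isDomain (A : Matrix m n R) : Aᵀ.rank = A.rank := by
  rw [← rank_map_fractionRing, transpose_map, rank_transpose, rank_map_fractionRing]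

lemma finrank_ker_vecMulLinear_add_rank (A : Matrix m n R) :
    Module.finrank R (LinearMap.ker A.vecMulLinear) + A.rank = Fintype.card m := by
  have hrange : Module.finrank R (LinearMap.range A.vecMulLinear) = A.rank := by
    rw [← rank_transpose_of_isDomain, Matrix.rank, mulVecLin_transpose]
  rw [← hrange, ← A.vecMulLinear.quotKerEquivRange.finrank_eq, add_comm,
    Submodule.finrank_quotient_add_finrank, Module.finrank_pi]

lemma leftKernel_mul {K ι κ ν : Type*} [Field K] [Fintype ι] [Fintype κ] (A : Matrix ι κ K[X])
    (B : Matrix κ ν K[X]) : leftKernel (A * B) = (leftKernel B).comap A.vecMulLinear := by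
  ext v
  simp only [leftKernel, LinearMap.mem_ker, Submodule.mem_comap, vecMulLinear_apply, vecMul_vecMul]

lemma finrank_leftKernel {K ι ν : Type*} [Field K] [Fintype ι] [Fintype ν] (F : Matrix ι ν K[X]) :
    Module.finrank K[X] (leftKernel F) = Fintype.card ι - F.rank :=
  eq_tsub_of_add_eq (finrank_ker_vecMulLinear_add_rank F)

lemma IsBasisOf.nat_card_eq_finrank {K ι ν : Type*} [Field K] {B : Matrix ι ν K[X]}
    {M : Submodule K[X] (ν → K[X])} (h : IsBasisOf B M) :
    Nat.card ι = Module.finrank K[X] M := by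
  rw [← Module.finrank_eq_nat_card_basis (Module.Basis.span h.1), h.2]

end Rank

lemma exists_sum_pow_mul_eq_of_monic {R : Type*} [CommRing R] [Nontrivial R] {g : R[X]}
    (hg : g.Monic) (q : R[X]) (a : ℕ) :
    ∃ w : ℕ → R[X], ∑ i ∈ Finset.range (a + 1), g ^ i * w i = q ∧
      ∀ i < a, (w i).degree < g.degree := by
  induction a generalizing q with
  | zero => exact ⟨fun _ ↦ q, by simp, by simp⟩
  | succ a ih =>
    obtain ⟨w, hsum, hdeg⟩ := ih (q /ₘ g)
    refine ⟨fun | 0 => q %ₘ g | i + 1 => w i, ?_, fun i hi ↦ ?_⟩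
    · rw [Finset.sum_range_succ', pow_zero, one_mul]
      conv_rhs => rw [← modByMonic_add_div q g, ← hsum, Finset.mul_sum, add_comm]
      simp only [pow_succ', mul_assoc]
    · cases i with
      | zero => exact degree_modByMonic_lt q hg
      | succ i => exact hdeg i (by omega)

section ColumnPartialLinearization

variable {K : Type*} [Field K] {δ m : ℕ} {s : Fin m → ℕ} {j : Fin m} {c : CplIdx δ s}

lemma one_le_cplα (δ : ℕ) (s : Fin m → ℕ) (j : Fin m) : 1 ≤ cplα δ s j :=
  le_max_left _ _

lemma succ_mul_lt_of_succ_lt_cplα (hδ : 0 < δ) {i : ℕ} (hi : i + 1 < cplα δ s j) :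
    (i + 1) * δ < s j := by
  have hdiv : i + 1 + 1 ≤ (s j + δ - 1) / δ := by
    simp only [cplα] at hi
    omega
  rw [Nat.le_div_iff_mul_le hδ, Nat.succ_mul] at hdiv
  omega

lemma cplα_sub_one_mul_add_cplβ (hδ : 0 < δ) (s : Fin m → ℕ) (j : Fin m) :
    (cplα δ s j - 1) * δ + cplβ δ s j = s j := by
  refine Nat.add_sub_of_le ?_
  obtain h | ⟨i, hi⟩ : cplα δ s j = 1 ∨ ∃ i, cplα δ s j = i + 1 + 1 :=
    (one_le_cplα δ s j).eq_or_lt.imp Eq.symm fun h ↦ ⟨cplα δ s j - 2, by omega⟩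
  · simp [h]
  · rw [hi, Nat.add_sub_cancel]
    exact (succ_mul_lt_of_succ_lt_cplα hδ (by omega)).le

/-- The last index `α_1 + ⋯ + α_j` of the `j`-th block of expanded columns. -/
def cplLast (δ : ℕ) (s : Fin m → ℕ) (j : Fin m) : CplIdx δ s :=
  toLex ⟨j, ⟨cplα δ s j - 1, by unfold cplα; omega⟩⟩

lemma mem_range_cplLast_iff :
    c ∈ Set.range (cplLast δ s) ↔ ((ofLex c).2 : ℕ) = cplα δ s (ofLex c).1 - 1 := by
  constructor
  · rintro ⟨j, rfl⟩
    rfl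
  · exact fun h ↦ ⟨(ofLex c).1, congrArg (fun i ↦ (toLex ⟨_, i⟩ : CplIdx δ s)) (Fin.ext h.symm)⟩

lemma cplLast_strictMono (δ : ℕ) (s : Fin m → ℕ) : StrictMono (cplLast δ s) :=
  fun _ _ h ↦ Sigma.Lex.lt_def.2 (.inl h)

lemma cplShift_cplLast (δ : ℕ) (s : Fin m → ℕ) (j : Fin m) :
    cplShift δ s (cplLast δ s j) = cplβ δ s j :=
  if_pos rfl

lemma cplShift_of_notMem_range (hc : c ∉ Set.range (cplLast δ s)) : cplShift δ s c = δ :=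
  if_neg (mem_range_cplLast_iff.not.1 hc)

lemma vecMul_cplE_apply (w : CplIdx δ s → K[X]) (j : Fin m) :
    (w ᵥ* cplE K δ s) j = ∑ i : Fin (cplα δ s j), X ^ (i * δ) * w (toLex ⟨j, i⟩) := by
  have hsum : (w ᵥ* cplE K δ s) j =
      ∑ c : (k : Fin m) × Fin (cplα δ s k), w (toLex c) * cplE K δ s (toLex c) j := rfl
  rw [hsum, Fintype.sum_sigma, Finset.sum_eq_single_of_mem j (Finset.mem_univ j)]
  · simp [cplE, mul_comm]
  · intro k _ hk
    simp [cplE, hk]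

lemma termCoeff_vecMul_cplE (hδ : 0 < δ) {w : CplIdx δ s → K[X]} {e : ℤ}
    (hw : ∀ c ∉ Set.range (cplLast δ s), ∀ e', e < e' →
      termCoeff (fun c ↦ -(cplShift δ s c : ℤ)) (toLex (e', c)) w = 0) (j : Fin m) :
    termCoeff (fun j ↦ -(s j : ℤ)) (toLex (e, j)) (w ᵥ* cplE K δ s) =
      termCoeff (fun c ↦ -(cplShift δ s c : ℤ)) (toLex (e, cplLast δ s j)) w := by
  have hs : ((cplα δ s j - 1 : ℕ) * δ + cplβ δ s j : ℤ) = s j := by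
    exact_mod_cast cplα_sub_one_mul_add_cplβ hδ s j
  let last : Fin (cplα δ s j) := (ofLex (cplLast δ s j)).2
  simp only [termCoeff_toLex] at hw ⊢
  rw [vecMul_cplE_apply, coeffZ_sum, Finset.sum_eq_single_of_mem last (Finset.mem_univ _)]
  · change coeffZ (X ^ ((cplα δ s j - 1) * δ) * w (cplLast δ s j)) _ = _
    rw [coeffZ_X_pow_mul, cplShift_cplLast]
    congr 1
    push_cast
    omega
  · intro i _ hi
    have hne : (i : ℕ) ≠ cplα δ s j - 1 := fun h ↦ hi (Fin.ext h)
    have hc : toLex ⟨j, i⟩ ∉ Set.range (cplLast δ s) := mem_range_cplLast_iff.not.2 hne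
    have hlt : ((i : ℕ) * δ + δ : ℤ) < s j := by
      exact_mod_cast i.val.succ_mul δ ▸ succ_mul_lt_of_succ_lt_cplα hδ (by omega)
    rw [coeffZ_X_pow_mul]
    convert hw _ hc (e + s j - i * δ - δ) (by omega) using 2
    rw [cplShift_of_notMem_range hc]
    push_cast
    ring

lemma IsLeading.vecMul_cplE (hδ : 0 < δ) {w : CplIdx δ s → K[X]} {d : ℤ}
    (hw : IsLeading (fun c ↦ -(cplShift δ s c : ℤ)) w (toLex (d, cplLast δ s j))) :
    IsLeading (fun j ↦ -(s j : ℤ)) (w ᵥ* cplE K δ s) (toLex (d, j)) := by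
  have hE {e : ℤ} (he : d ≤ e) := termCoeff_vecMul_cplE hδ (w := w) (e := e) fun c _ e' h ↦
    hw.termCoeff_eq_zero (Prod.Lex.toLex_lt_toLex.2 (.inl (he.trans_lt h)))
  refine isLeading_iff.2 ⟨?_, fun b hb ↦ ?_⟩
  · rw [hE le_rfl]
    exact hw.termCoeff_ne_zero
  · obtain ⟨e, j'⟩ := b
    have hb := Prod.Lex.toLex_lt_toLex.1 hb
    refine (hE (hb.elim le_of_lt fun h ↦ h.1.le) j').trans (hw.termCoeff_eq_zero ?_)
    exact Prod.Lex.toLex_lt_toLex.2 (hb.imp_right fun h ↦ ⟨h.1, cplLast_strictMono δ s h.2⟩)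

lemma exists_vecMul_cplE_eq_of_degree_lt (δ : ℕ) (s : Fin m → ℕ) (v : Fin m → K[X]) :
    ∃ w : CplIdx δ s → K[X], w ᵥ* cplE K δ s = v ∧
      ∀ c ∉ Set.range (cplLast δ s), (w c).degree < δ := by
  choose w hsum hdeg using fun j ↦
    exists_sum_pow_mul_eq_of_monic (monic_X_pow (R := K) δ) (v j) (cplα δ s j - 1)
  refine ⟨fun c ↦ w (ofLex c).1 (ofLex c).2, funext fun j ↦ ?_, fun c hc ↦ ?_⟩
  · rw [vecMul_cplE_apply]
    conv_rhs => rw [← hsum j, Nat.sub_add_cancel (one_le_cplα δ s j), ← Fin.sum_univ_eq_sum_range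
      fun i ↦ (X ^ δ) ^ i * w j i]
    simp only [ofLex_toLex, ← pow_mul, mul_comm δ]
  · rw [← degree_X_pow (R := K) δ]
    have := mem_range_cplLast_iff.not.1 hc
    exact hdeg _ _ (by omega)

lemma IsLeading.exists_vecMul_cplE_eq (hδ : 0 < δ) {v : Fin m → K[X]} {d : ℤ}
    (hv : IsLeading (fun j ↦ -(s j : ℤ)) v (toLex (d, j))) (hd : 0 ≤ d) :
    ∃ w : CplIdx δ s → K[X], w ᵥ* cplE K δ s = v ∧
      IsLeading (fun c ↦ -(cplShift δ s c : ℤ)) w (toLex (d, cplLast δ s j)) := by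
  obtain ⟨w, rfl, hdeg⟩ := exists_vecMul_cplE_eq_of_degree_lt δ s v
  have hzero (c) (hc : c ∉ Set.range (cplLast δ s)) (e : ℤ) (he : 0 ≤ e) :
      termCoeff (fun c ↦ -(cplShift δ s c : ℤ)) (toLex (e, c)) w = 0 := by
    rw [termCoeff_toLex, cplShift_of_notMem_range hc, sub_neg_eq_add, coeffZ, if_pos (by omega)]
    exact coeff_eq_zero_of_degree_lt ((hdeg c hc).trans_le (by exact_mod_cast (by omega)))
  have hE {e : ℤ} (he : d ≤ e) := termCoeff_vecMul_cplE hδ (w := w) (e := e) fun c hc e' h ↦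
    hzero c hc e' (by omega)
  refine ⟨w, rfl, isLeading_iff.2 ⟨?_, fun b hb ↦ ?_⟩⟩
  · rw [← hE le_rfl]
    exact hv.termCoeff_ne_zero
  · obtain ⟨e, c⟩ := b
    have hb := Prod.Lex.toLex_lt_toLex.1 hb
    have hde : d ≤ e := hb.elim le_of_lt fun h ↦ h.1.le
    by_cases hc : c ∈ Set.range (cplLast δ s)
    · obtain ⟨j', rfl⟩ := hc
      refine (hE hde j').symm.trans (hv.termCoeff_eq_zero ?_)
      exact Prod.Lex.toLex_lt_toLex.2 <| hb.imp_right fun h ↦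
        ⟨h.1, (cplLast_strictMono δ s).lt_iff_lt.1 h.2⟩
    · exact hzero c hc e (hd.trans hde)

end ColumnPartialLinearization

theorem cpl_recover_kernel_basis_general {K ι : Type*} [Field K] [LinearOrder ι] {m : ℕ}
    (s : Fin m → ℕ) (δ : ℕ) (hδ : 0 < δ) (M : Submodule K[X] (Fin m → K[X]))
    (hred : ∀ (k : ℕ) (B : Matrix (Fin k) (Fin m) K[X]), IsBasisOf B M →
      IsReducedForm (fun j ↦ -(s j : ℤ)) B →
      ∀ i, ((0 : ℤ) : WithBot ℤ) ≤ rdeg (fun j ↦ -(s j : ℤ)) B i)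
    (Q : Matrix ι (CplIdx δ s) K[X])
    (hQbasis : IsBasisOf Q (M.comap (cplE K δ s).vecMulLinear))
    (hQwp : IsWeakPopov (fun c ↦ -(cplShift δ s c : ℤ)) Q) :
    let cond : ι → Prop := fun i ↦ ∃ j : Fin m,
      piv (fun c ↦ -(cplShift δ s c : ℤ)) (Q i) = (cplLast δ s j : WithBot (CplIdx δ s))
    let P : Matrix {i // cond i} (Fin m) K[X] := Matrix.of fun i ↦ Q i.1 ᵥ* cplE K δ s
    Nat.card {i // cond i} = Module.finrank K[X] M ∧ IsBasisOf P M ∧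
      IsWeakPopov (fun j ↦ -(s j : ℤ)) P := by
  intro cond P
  obtain ⟨d, p, hp, hQ⟩ := isWeakPopov_iff.1 hQwp
  have exists_last (i : {i // cond i}) : ∃ j, p i = cplLast δ s j :=
    i.2.imp fun j hj ↦ WithBot.coe_inj.1 ((hQ i).piv_eq.symm.trans hj)
  choose j hj using exists_last
  have hlast := cplLast_strictMono δ s
  have hj_mono : StrictMono j := fun i i' h ↦
    hlast.lt_iff_lt.1 (by simpa only [← hj] using hp h)
  have hP (i) : IsLeading (fun j ↦ -(s j : ℤ)) (P i) (toLex (d i, j i)) :=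
    (hj i ▸ hQ i).vecMul_cplE hδ
  have hPM (i) : P i ∈ M := hQbasis.2.le (Submodule.subset_span ⟨i.1, rfl⟩)
  have hlead (a) (ha : a ∈ leadingPositions (fun j ↦ -(s j : ℤ)) M) :
      ∃ i, ∃ k : ℕ, a = toLex (d i.1 + k, j i) := by
    obtain ⟨e, q⟩ := a
    have he : 0 ≤ e := le_fst_of_mem_leadingPositions hred ha
    obtain ⟨v, hvM, hv⟩ := ha
    obtain ⟨w, rfl, hw⟩ := hv.exists_vecMul_cplE_eq hδ he
    obtain ⟨i, k, hik⟩ := (mem_leadingPositions_span_iff hp.injective hQ).1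
      (hQbasis.2.symm ▸ ⟨w, hvM, hw⟩ : toLex (e, cplLast δ s q) ∈ leadingPositions _ _)
    obtain ⟨rfl, hq⟩ : e = d i + k ∧ cplLast δ s q = p i := Prod.ext_iff.1 (toLex.injective hik)
    have hi : cond i := ⟨q, (hQ i).piv_eq.trans (congrArg _ hq.symm)⟩
    obtain rfl : q = j ⟨i, hi⟩ := hlast.injective (hq.trans (hj ⟨i, hi⟩))
    exact ⟨⟨i, hi⟩, k, rfl⟩
  have hPbasis : IsBasisOf P M := isBasisOf_of_leadingPositions hj_mono.injective hP hPM hlead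
  exact ⟨hPbasis.nat_card_eq_finrank, hPbasis, isWeakPopov_iff.2 ⟨_, j, hj_mono, hP⟩⟩

/-- Lemma 5.7: recovering a `(−s)`-weak Popov kernel basis
of `F` from the rows of a `(−s̄)`-weak Popov basis `Q` of `ker(EF)` whose
pivot index is the last index of its block: there are exactly `m − rank F`
such rows, and compressing them by `E` yields a basis of `ker F` in
`(−s)`-weak Popov form. -/
theorem cpl_recover_kernel_basis {K : Type*} [Field K] {m n r : ℕ}
    (s : Fin m → ℕ) (δ : ℕ) (hδ : 0 < δ)
    (F : Matrix (Fin m) (Fin n) K[X])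
    (hred : ∀ (k' : ℕ) (B : Matrix (Fin k') (Fin m) K[X]),
      IsBasisOf B (leftKernel F) → IsReducedForm (fun j => -(s j : ℤ)) B →
      ∀ i, ((0 : ℤ) : WithBot ℤ) ≤ rdeg (fun j => -(s j : ℤ)) B i)
    (hr : r = (∑ j, cplα δ s j) - F.rank)
    (Q : Matrix (Fin r) (CplIdx δ s) K[X])
    (hQbasis : IsBasisOf Q (leftKernel (cplE K δ s * F)))
    (hQwp : IsWeakPopov (fun c => -(cplShift δ s c : ℤ)) Q) :
    let cond : Fin r → Prop := fun i => ∃ j : Fin m,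
      piv (fun c => -(cplShift δ s c : ℤ)) (Q i) =
        ((toLex ⟨j, ⟨cplα δ s j - 1, by unfold cplα; omega⟩⟩ : CplIdx δ s) :
          WithBot (CplIdx δ s))
    let P : Matrix {i // cond i} (Fin m) K[X] :=
      Matrix.of fun i j => (Q i.1 ᵥ* cplE K δ s) j
    Nat.card {i // cond i} = m - F.rank ∧
    IsBasisOf P (leftKernel F) ∧
    IsWeakPopov (fun j => -(s j : ℤ)) P := by
  have hfinrank : Module.finrank K[X] (leftKernel F) = m - F.rank := by
    rw [finrank_leftKernel, Fintype.card_fin]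
  rw [leftKernel_mul] at hQbasis
  rw [← hfinrank]
  exact cpl_recover_kernel_basis_general s δ hδ (leftKernel F) hred Q hQbasis hQwp
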